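/- Let R ⊆ ℤ² be obtained from S_0 = {(1,0),(0,1),(−1,0),(0,−1)} (the ray set of the fan of ℂP¹ × ℂP¹) by a finite sequence of toric blow-up steps. Then there exist a natural number j and a further finite sequence of toric blow-up steps taking R to the set S_j exactly. (Fan-level statement of: every iterated toric blow-up of ℂP¹ × ℂP¹ can be further blown up torus-equivariantly to become one of the surfaces X_j.) -/

import Mathlib

/-- The determinant `det(v,w) = v₁w₂ − v₂w₁` of a pair of lattice vectors. -/
def latDet (v w : ℤ × ℤ) : ℤ := v.1 * w.2 - v.2 * w.1

/-- `v, w ∈ S` form an adjacent pair of the fan with ray set `S` if `det(v,w) > 0` and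
no element of `S` lies in the open cone `{αv + βw : α > 0, β > 0, α, β ∈ ℝ}`. -/
def AdjacentPair (S : Set (ℤ × ℤ)) (v w : ℤ × ℤ) : Prop :=
  v ∈ S ∧ w ∈ S ∧ 0 < latDet v w ∧
    ∀ u ∈ S, ¬ ∃ α β : ℝ, 0 < α ∧ 0 < β ∧
      (u.1 : ℝ) = α * v.1 + β * w.1 ∧ (u.2 : ℝ) = α * v.2 + β * w.2

/-- A toric blow-up step replaces the ray set `S` by `S ∪ {v+w}` for an adjacent pair
`(v,w)` of `S`; this is the fan-level description of blowing up the torus fixed point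
corresponding to the two-dimensional cone spanned by `v` and `w`. -/
def BlowUpStep (S T : Set (ℤ × ℤ)) : Prop :=
  ∃ v w : ℤ × ℤ, AdjacentPair S v w ∧ T = S ∪ {v + w}

/-- `BlowUpSeq m S T` means `T` is obtained from `S` by a sequence of `m` toric
blow-up steps. -/
def BlowUpSeq : ℕ → Set (ℤ × ℤ) → Set (ℤ × ℤ) → Prop
  | 0, S, T => T = S
  | m + 1, S, T => ∃ R : Set (ℤ × ℤ), BlowUpSeq m S R ∧ BlowUpStep R T

/-- `Σ_n = {(0,−1),(1,0),(0,1),(−1,−n)}`, the set of ray generators of the fan of the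
Hirzebruch surface `F_n` (with `F_0 = ℂP¹ × ℂP¹`). -/
def hirzebruchFan (n : ℕ) : Set (ℤ × ℤ) :=
  {(0, -1), (1, 0), (0, 1), (-1, -(n : ℤ))}

/-- Mediant insertion: between each pair of consecutive entries insert their sum. -/
def mediantInsert : List (ℤ × ℤ) → List (ℤ × ℤ)
  | [] => []
  | [a] => [a]
  | a :: b :: t => a :: (a + b) :: mediantInsert (b :: t)

/-- The list `L_j`: `L_0 = [(1,0),(0,1)]` and `L_{j+1}` is obtained from `L_j` by
mediant insertion.  `L_j` encodes the rays of the fan of the toric surface `X_j`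
lying in the closed first quadrant, where `X_0 = ℂP¹ × ℂP¹` and `X_{j+1}` is the
blow-up of `X_j` at all of its torus fixed points. -/
def rayList : ℕ → List (ℤ × ℤ)
  | 0 => [(1, 0), (0, 1)]
  | j + 1 => mediantInsert (rayList j)

/-- The set `S_j = { (ε₁·a, ε₂·b) : (a,b) an entry of L_j, ε₁, ε₂ ∈ {1,−1} }`, the set
of primitive generators of the rays of the fan of the toric surface `X_j`. -/
def raySet (j : ℕ) : Set (ℤ × ℤ) :=
  {p | ∃ q ∈ rayList j, ∃ ε₁ ε₂ : ℤ, (ε₁ = 1 ∨ ε₁ = -1) ∧ (ε₂ = 1 ∨ ε₂ = -1) ∧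
    p = (ε₁ * q.1, ε₂ * q.2)}

/-!
Blow-ups at different fixed points commute: the open cones of two distinct adjacent pairs are
disjoint, so blowing up one of them leaves the other one adjacent. Write `B` for the blow-up at all
fixed points. If `R` can be blown up to `Bᵐ(S)` and `R'` is the blow-up of `R` at one fixed point,
then commutation carries this last blow-up along to `Bᵐ(S)`, where it is either already contained or
a blow-up at one fixed point; in both cases the result can be blown up to `Bᵐ⁺¹(S)`. So an `m`-fold
blow-up of `S` can always be blown up further to `Bᵐ(S)`.

Finally `S_{j+1} = B(S_j)`: by symmetry under the reflections in the axes this can be checked in the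
first quadrant, where the rays of `L_j` are sorted by angle and adjacent means consecutive.
-/

open Relation

section LatDet

lemma latDet_self (v : ℤ × ℤ) : latDet v v = 0 := by
  simp only [latDet]; ring

lemma neg_latDet (v w : ℤ × ℤ) : -latDet v w = latDet w v := by
  simp only [latDet]; ring

lemma latDet_add_left (u v w : ℤ × ℤ) : latDet (u + v) w = latDet u w + latDet v w := by
  simp only [latDet, Prod.fst_add, Prod.snd_add]; ring

lemma latDet_add_right (u v w : ℤ × ℤ) : latDet u (v + w) = latDet u v + latDet u w := by
  simp only [latDet, Prod.fst_add, Prod.snd_add]; ring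

lemma latDet_smul_left (r : ℤ) (v w : ℤ × ℤ) : latDet (r • v) w = r * latDet v w := by
  simp only [latDet, Prod.smul_fst, Prod.smul_snd, smul_eq_mul]; ring

lemma latDet_smul_right (r : ℤ) (v w : ℤ × ℤ) : latDet v (r • w) = r * latDet v w := by
  simp only [latDet, Prod.smul_fst, Prod.smul_snd, smul_eq_mul]; ring

lemma latDet_mul_mul (ε v w : ℤ × ℤ) :
    latDet (ε * v) (ε * w) = ε.1 * ε.2 * latDet v w := by
  simp only [latDet, Prod.fst_mul, Prod.snd_mul]; ring

lemma latDet_smul_eq_add (u v w : ℤ × ℤ) :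
    latDet v w • u = latDet u w • v + latDet v u • w := by
  ext <;> simp [latDet] <;> ring

lemma latDet_mul_latDet (u v w x : ℤ × ℤ) :
    latDet v x * latDet u w = latDet v u * latDet x w + latDet v w * latDet u x := by
  simp only [latDet]; ring

lemma ne_zero_of_latDet_pos_left {v w : ℤ × ℤ} (h : 0 < latDet v w) : v ≠ 0 := by
  rintro rfl
  simp [latDet] at h

lemma ne_zero_of_latDet_pos_right {v w : ℤ × ℤ} (h : 0 < latDet v w) : w ≠ 0 := by
  rintro rfl
  simp [latDet] at h

lemma sameRay_of_latDet_eq_zero {v w x : ℤ × ℤ} (h : latDet v w = 0)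
    (hv : 0 < latDet v x) (hw : 0 < latDet w x) : SameRay ℤ v w :=
  .inr <| .inr ⟨latDet w x, latDet v x, hw, hv, by
    simpa [h, ← neg_latDet v w] using latDet_smul_eq_add v w x⟩

end LatDet

section OpenCone

variable {u v w x : ℤ × ℤ}

/-- The lattice points of the open cone spanned by `v` and `w`, described by determinants. This is
the cone of `AdjacentPair` when `det(v,w) > 0`, see `mem_openCone_iff_exists_real`. -/
def openCone (v w : ℤ × ℤ) : Set (ℤ × ℤ) := {u | 0 < latDet v u ∧ 0 < latDet u w}

lemma mem_openCone_iff_exists_real (h : 0 < latDet v w) :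
    u ∈ openCone v w ↔ ∃ α β : ℝ, 0 < α ∧ 0 < β ∧
      (u.1 : ℝ) = α * v.1 + β * w.1 ∧ (u.2 : ℝ) = α * v.2 + β * w.2 := by
  have cast_pos (a b : ℤ × ℤ) : 0 < latDet a b ↔ (0 : ℝ) < a.1 * b.2 - a.2 * b.1 := by
    simp only [latDet]; exact_mod_cast Iff.rfl
  rw [cast_pos] at h
  simp only [openCone, Set.mem_ofPred_eq, cast_pos]
  constructor
  · rintro ⟨hvu, huw⟩
    -- Cramer's rule
    refine ⟨_, _, div_pos huw h, div_pos hvu h, ?_, ?_⟩ <;>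
      rw [div_mul_eq_mul_div, div_mul_eq_mul_div, ← add_div, eq_div_iff h.ne'] <;> ring
  · rintro ⟨α, β, hα, hβ, h₁, h₂⟩
    rw [h₁, h₂]
    constructor <;> linarith [mul_pos hα h, mul_pos hβ h]

lemma add_mem_openCone (h : 0 < latDet v w) : v + w ∈ openCone v w := by
  simpa [openCone, latDet_add_left, latDet_add_right, latDet_self] using h

lemma mem_openCone_of_between_left (h : 0 < latDet v w) (hx : x ∈ openCone v w)
    (hvu : 0 < latDet v u) (hux : 0 < latDet u x) : u ∈ openCone v w := by
  refine ⟨hvu, pos_of_mul_pos_right ?_ hx.1.le⟩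
  rw [latDet_mul_latDet]
  exact add_pos (mul_pos hvu hx.2) (mul_pos h hux)

lemma mem_openCone_of_between_right (h : 0 < latDet v w) (hx : x ∈ openCone v w)
    (hxu : 0 < latDet x u) (huw : 0 < latDet u w) : u ∈ openCone v w := by
  refine ⟨pos_of_mul_pos_left ?_ hx.2.le, huw⟩
  have hplucker := latDet_mul_latDet u v w x
  rw [← neg_latDet x u] at hplucker
  linarith [mul_pos hx.1 huw, mul_pos h hxu]

lemma mem_openCone_of_sameRay (hx : x ∈ openCone v w) (hu : u ≠ 0) (h : SameRay ℤ x u) :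
    u ∈ openCone v w := by
  obtain ⟨r, s, hr, hs, hrs⟩ := h.exists_pos (ne_zero_of_latDet_pos_right hx.1) hu
  constructor
  · refine pos_of_mul_pos_right ?_ hs.le
    rw [← latDet_smul_right, ← hrs, latDet_smul_right]
    exact mul_pos hr hx.1
  · refine pos_of_mul_pos_right ?_ hs.le
    rw [← latDet_smul_left, ← hrs, latDet_smul_left]
    exact mul_pos hr hx.2

lemma nonneg_of_mem_openCone (hv : 0 ≤ v) (hw : 0 ≤ w) (h : 0 < latDet v w)
    (hu : u ∈ openCone v w) : 0 ≤ u := by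
  have hsmul : 0 ≤ latDet v w • u := by
    rw [latDet_smul_eq_add]
    exact add_nonneg (smul_nonneg hu.2.le hv) (smul_nonneg hu.1.le hw)
  exact ⟨nonneg_of_mul_nonneg_right hsmul.1 h, nonneg_of_mul_nonneg_right hsmul.2 h⟩

end OpenCone

section AdjacentPair

variable {S : Set (ℤ × ℤ)} {v w v' w' x : ℤ × ℤ}

lemma adjacentPair_iff :
    AdjacentPair S v w ↔ v ∈ S ∧ w ∈ S ∧ 0 < latDet v w ∧ ∀ u ∈ S, u ∉ openCone v w :=
  and_congr_right' <| and_congr_right' <| and_congr_right fun h => by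
    simp only [mem_openCone_iff_exists_real h]

/-- Distinct elements of `S` generate distinct rays. Opposite vectors are allowed, since `SameRay`
only compares positive multiples. -/
def DistinctRays (S : Set (ℤ × ℤ)) : Prop := S.Pairwise fun u v => ¬SameRay ℤ u v

lemma AdjacentPair.eq_of_mem_openCone (hS : DistinctRays S) (h : AdjacentPair S v w)
    (h' : AdjacentPair S v' w') (hx : x ∈ openCone v w) (hx' : x ∈ openCone v' w') :
    v = v' ∧ w = w' := by
  obtain ⟨hv, hw, hvw, hempty⟩ := adjacentPair_iff.1 h
  obtain ⟨hv', hw', hvw', hempty'⟩ := adjacentPair_iff.1 h'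
  have hdet_left : latDet v v' = 0 := by
    refine le_antisymm (not_lt.1 fun hlt => ?_) (not_lt.1 fun hlt => ?_)
    · exact hempty v' hv' (mem_openCone_of_between_left hvw hx hlt hx'.1)
    · rw [← neg_pos, neg_latDet] at hlt
      exact hempty' v hv (mem_openCone_of_between_left hvw' hx' hlt hx.1)
  have hdet_right : latDet w w' = 0 := by
    refine le_antisymm (not_lt.1 fun hlt => ?_) (not_lt.1 fun hlt => ?_)
    · exact hempty' w hw (mem_openCone_of_between_right hvw' hx' hx.2 hlt)
    · rw [← neg_pos, neg_latDet] at hlt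
      exact hempty w' hw' (mem_openCone_of_between_right hvw hx hx'.2 hlt)
  have neg_right (u : ℤ × ℤ) : latDet u (-x) = latDet x u := by
    rw [← neg_one_smul ℤ x, latDet_smul_right, neg_one_mul, neg_latDet]
  refine ⟨hS.eq hv hv' (not_not.2 ?_), hS.eq hw hw' (not_not.2 ?_)⟩
  · exact sameRay_of_latDet_eq_zero hdet_left hx.1 hx'.1
  · refine sameRay_of_latDet_eq_zero (x := -x) hdet_right ?_ ?_
    · rw [neg_right]; exact hx.2
    · rw [neg_right]; exact hx'.2

lemma AdjacentPair.insert_of_ne (hS : DistinctRays S) (h : AdjacentPair S v w)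
    (h' : AdjacentPair S v' w') (hne : v + w ≠ v' + w') :
    AdjacentPair (insert (v + w) S) v' w' := by
  obtain ⟨hv', hw', hvw', hempty'⟩ := adjacentPair_iff.1 h'
  refine adjacentPair_iff.2 ⟨.inr hv', .inr hw', hvw', ?_⟩
  rintro u (rfl | hu) hcone
  · obtain ⟨rfl, rfl⟩ := h.eq_of_mem_openCone hS h' (add_mem_openCone h.2.2.1) hcone
    exact hne rfl
  · exact hempty' u hu hcone

lemma DistinctRays.zero_notMem (hS : DistinctRays S) (hv : v ∈ S) (hv0 : v ≠ 0) : 0 ∉ S :=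
  fun h0 => hS h0 hv hv0.symm (SameRay.zero_left v)

lemma DistinctRays.insert_add (hS : DistinctRays S) (h : AdjacentPair S v w) :
    DistinctRays (insert (v + w) S) := by
  obtain ⟨hv, -, hvw, hempty⟩ := adjacentPair_iff.1 h
  have : Std.Symm fun u v : ℤ × ℤ => ¬SameRay ℤ u v := ⟨fun _ _ => mt SameRay.symm⟩
  refine Set.pairwise_insert_of_symm.2 ⟨hS, fun u hu _ hray => ?_⟩
  have hu0 : u ≠ 0 :=
    ne_of_mem_of_not_mem hu (hS.zero_notMem hv (ne_zero_of_latDet_pos_left hvw))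
  exact hempty u hu (mem_openCone_of_sameRay (add_mem_openCone hvw) hu0 hray)

end AdjacentPair

section Confluence

variable {S T : Set (ℤ × ℤ)} {v w : ℤ × ℤ}

lemma exists_blowUpSeq_iff : (∃ r, BlowUpSeq r S T) ↔ ReflTransGen BlowUpStep S T := by
  constructor
  · rintro ⟨r, h⟩
    induction r generalizing T with
    | zero => exact h ▸ .refl
    | succ r ih =>
      obtain ⟨R, hR, hstep⟩ := h
      exact (ih hR).tail hstep
  · intro h
    induction h with
    | refl => exact ⟨0, rfl⟩
    | tail _ hstep ih =>
      obtain ⟨r, hr⟩ := ih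
      exact ⟨r + 1, _, hr, hstep⟩

lemma blowUpStep_iff : BlowUpStep S T ↔ ∃ v w, AdjacentPair S v w ∧ T = insert (v + w) S := by
  simp only [BlowUpStep, Set.union_singleton]

lemma AdjacentPair.blowUpStep (h : AdjacentPair S v w) : BlowUpStep S (insert (v + w) S) :=
  blowUpStep_iff.2 ⟨v, w, h, rfl⟩

lemma DistinctRays.of_reflTransGen (hS : DistinctRays S) (h : ReflTransGen BlowUpStep S T) :
    DistinctRays T := by
  induction h with
  | refl => exact hS
  | tail _ hstep ih =>
    obtain ⟨v, w, hvw, rfl⟩ := blowUpStep_iff.1 hstep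
    exact ih.insert_add hvw

lemma AdjacentPair.of_reflTransGen (hS : DistinctRays S) (h : AdjacentPair S v w)
    (hST : ReflTransGen BlowUpStep S T) : v + w ∈ T ∨ AdjacentPair T v w := by
  induction hST with
  | refl => exact .inr h
  | tail hST hstep ih =>
    obtain ⟨v', w', h', rfl⟩ := blowUpStep_iff.1 hstep
    rcases ih with hmem | hadj
    · exact .inl (.inr hmem)
    · rcases eq_or_ne (v' + w') (v + w) with heq | hne
      · exact .inl (.inl heq.symm)
      · exact .inr (h'.insert_of_ne (hS.of_reflTransGen hST) hadj hne)

lemma reflTransGen_insert_of_mem_or_adjacentPair (h : v + w ∈ T ∨ AdjacentPair T v w) :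
    ReflTransGen BlowUpStep T (insert (v + w) T) := by
  rcases h with hmem | hadj
  · rw [Set.insert_eq_of_mem hmem]
  · exact .single hadj.blowUpStep

lemma AdjacentPair.reflTransGen_insert (hS : DistinctRays S) (h : AdjacentPair S v w)
    (hST : ReflTransGen BlowUpStep S T) :
    ReflTransGen BlowUpStep (insert (v + w) S) (insert (v + w) T) := by
  induction hST with
  | refl => exact .refl
  | tail hST hstep ih =>
    obtain ⟨v', w', h', rfl⟩ := blowUpStep_iff.1 hstep
    refine ih.trans ?_
    rw [Set.insert_comm]
    refine reflTransGen_insert_of_mem_or_adjacentPair ?_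
    have hT := hS.of_reflTransGen hST
    rcases h.of_reflTransGen hS hST with hmem | hadj
    · rw [Set.insert_eq_of_mem hmem]
      exact .inr h'
    · exact h'.of_reflTransGen hT (.single hadj.blowUpStep)

/-- The blow-up of `S` at all of its torus fixed points. -/
def blowUpAll (S : Set (ℤ × ℤ)) : Set (ℤ × ℤ) :=
  S ∪ {x | ∃ v w, AdjacentPair S v w ∧ v + w = x}

lemma subset_blowUpAll (S : Set (ℤ × ℤ)) : S ⊆ blowUpAll S := Set.subset_union_left

lemma AdjacentPair.add_mem_blowUpAll (h : AdjacentPair S v w) : v + w ∈ blowUpAll S :=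
  .inr ⟨v, w, h, rfl⟩

lemma finite_blowUpAll (hS : S.Finite) : (blowUpAll S).Finite := by
  refine hS.union ((hS.image2 (· + ·) hS).subset ?_)
  rintro _ ⟨v, w, h, rfl⟩
  exact Set.mem_image2_of_mem h.1 h.2.1

lemma reflTransGen_blowUpAll (hfin : S.Finite) (hS : DistinctRays S) :
    ReflTransGen BlowUpStep S (blowUpAll S) := by
  have hsums : {x | ∃ v w, AdjacentPair S v w ∧ v + w = x}.Finite :=
    (finite_blowUpAll hfin).subset Set.subset_union_right
  refine hsums.induction_on_subset (motive := fun F _ => ReflTransGen BlowUpStep S (S ∪ F)) _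
    (by rw [Set.union_empty]) ?_
  rintro _ F ⟨v, w, h, rfl⟩ - - ih
  rw [Set.union_insert]
  exact ih.trans (reflTransGen_insert_of_mem_or_adjacentPair (h.of_reflTransGen hS ih))

lemma reflTransGen_insert_blowUpAll (hfin : S.Finite) (hS : DistinctRays S)
    (h : v + w ∈ S ∨ AdjacentPair S v w) :
    ReflTransGen BlowUpStep (insert (v + w) S) (blowUpAll S) := by
  rcases h with hmem | hadj
  · rw [Set.insert_eq_of_mem hmem]
    exact reflTransGen_blowUpAll hfin hS
  · have := hadj.reflTransGen_insert hS (reflTransGen_blowUpAll hfin hS)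
    rwa [Set.insert_eq_of_mem hadj.add_mem_blowUpAll] at this

lemma finite_iterate_blowUpAll (hfin : S.Finite) (m : ℕ) : (blowUpAll^[m] S).Finite :=
  Function.Iterate.rec Set.Finite hfin (fun _ => finite_blowUpAll) m

lemma DistinctRays.iterate_blowUpAll (hS : DistinctRays S) (hfin : S.Finite) (m : ℕ) :
    DistinctRays (blowUpAll^[m] S) := by
  induction m with
  | zero => exact hS
  | succ m ih =>
    rw [Function.iterate_succ_apply']
    exact ih.of_reflTransGen (reflTransGen_blowUpAll (finite_iterate_blowUpAll hfin m) ih)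

theorem blowup_of_CP1xCP1_reaches_Xj_general (hfin : S.Finite) (hS : DistinctRays S) {m : ℕ}
    {R : Set (ℤ × ℤ)} (hR : BlowUpSeq m S R) : ∃ r, BlowUpSeq r R (blowUpAll^[m] S) := by
  rw [exists_blowUpSeq_iff]
  induction m generalizing R with
  | zero => exact hR ▸ .refl
  | succ m ih =>
    obtain ⟨Q, hQ, hstep⟩ := hR
    obtain ⟨v, w, h, rfl⟩ := blowUpStep_iff.1 hstep
    have hQdist : DistinctRays Q := hS.of_reflTransGen (exists_blowUpSeq_iff.1 ⟨m, hQ⟩)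
    rw [Function.iterate_succ_apply']
    exact (h.reflTransGen_insert hQdist (ih hQ)).trans <|
      reflTransGen_insert_blowUpAll (finite_iterate_blowUpAll hfin m)
        (hS.iterate_blowUpAll hfin m) (h.of_reflTransGen hQdist (ih hQ))

end Confluence

section Reflection

variable {S : Set (ℤ × ℤ)} {ε v w : ℤ × ℤ}

-- A reflection in the axes is encoded as multiplication in the ring `ℤ × ℤ` by an `ε` with
-- `ε * ε = 1`.

lemma mul_self_eq_one_iff_signs :
    ε * ε = 1 ↔ (ε.1 = 1 ∨ ε.1 = -1) ∧ (ε.2 = 1 ∨ ε.2 = -1) := by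
  simp [Prod.ext_iff, mul_self_eq_one_iff]

lemma mul_mul_cancel_of_mul_self_eq_one {M : Type*} [Monoid M] {a : M} (h : a * a = 1) (b : M) :
    a * (a * b) = b := by
  rw [← mul_assoc, h, one_mul]

lemma AdjacentPair.mul_left (hε : ε * ε = 1) (hS : ∀ u ∈ S, ε * u ∈ S)
    (h : AdjacentPair S v w) : AdjacentPair S (ε * v) (ε * w) ∨ AdjacentPair S (ε * w) (ε * v) := by
  obtain ⟨hv, hw, hvw, hempty⟩ := adjacentPair_iff.1 h
  have hdet : ε.1 * ε.2 = 1 ∨ ε.1 * ε.2 = -1 := by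
    obtain ⟨h₁ | h₁, h₂ | h₂⟩ := mul_self_eq_one_iff_signs.1 hε <;> simp [h₁, h₂]
  have hcone (a b u : ℤ × ℤ) : u ∈ openCone (ε * a) (ε * b) ↔
      0 < ε.1 * ε.2 * latDet a (ε * u) ∧ 0 < ε.1 * ε.2 * latDet (ε * u) b := by
    rw [← latDet_mul_mul, ← latDet_mul_mul, mul_mul_cancel_of_mul_self_eq_one hε]
    rfl
  refine hdet.imp (fun hdet => ?_) (fun hdet => ?_)
  · refine adjacentPair_iff.2 ⟨hS v hv, hS w hw, ?_, fun u hu hmem => hempty _ (hS u hu) ?_⟩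
    · rwa [latDet_mul_mul, hdet, one_mul]
    · rwa [hcone, hdet, one_mul, one_mul] at hmem
  · refine adjacentPair_iff.2 ⟨hS w hw, hS v hv, ?_, fun u hu hmem => hempty _ (hS u hu) ?_⟩
    · rwa [latDet_mul_mul, hdet, neg_one_mul, neg_latDet]
    · rw [hcone, hdet, neg_one_mul, neg_one_mul, neg_latDet, neg_latDet] at hmem
      exact hmem.symm

lemma mul_mem_blowUpAll (hε : ε * ε = 1) (hS : ∀ u ∈ S, ε * u ∈ S) {x : ℤ × ℤ}
    (hx : x ∈ blowUpAll S) : ε * x ∈ blowUpAll S := by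
  rcases hx with hx | ⟨v, w, h, rfl⟩
  · exact .inl (hS x hx)
  · rw [mul_add]
    rcases h.mul_left hε hS with h | h
    · exact h.add_mem_blowUpAll
    · rw [add_comm]
      exact h.add_mem_blowUpAll

lemma AdjacentPair.mul_nonneg_of_axes_mem
    (haxes : ({(1, 0), (0, 1), (-1, 0), (0, -1)} : Set (ℤ × ℤ)) ⊆ S) (h : AdjacentPair S v w) :
    0 ≤ v * w := by
  obtain ⟨-, -, hvw, hempty⟩ := adjacentPair_iff.1 h
  have hEast := hempty (1, 0) (haxes (by simp))
  have hNorth := hempty (0, 1) (haxes (by simp))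
  have hWest := hempty (-1, 0) (haxes (by simp))
  have hSouth := hempty (0, -1) (haxes (by simp))
  simp only [openCone, latDet, Set.mem_ofPred_eq] at hEast hNorth hWest hSouth hvw
  constructor
  · refine not_lt.1 fun hneg => ?_
    rcases mul_neg_iff.1 hneg with ⟨_, _⟩ | ⟨_, _⟩
    · exact hNorth ⟨by omega, by omega⟩
    · exact hSouth ⟨by omega, by omega⟩
  · refine not_lt.1 fun hneg => ?_
    rcases mul_neg_iff.1 hneg with ⟨_, _⟩ | ⟨_, _⟩
    · exact hWest ⟨by omega, by omega⟩
    · exact hEast ⟨by omega, by omega⟩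

lemma exists_sign_mul_nonneg (h : 0 ≤ v * w) : ∃ ε, ε * ε = 1 ∧ 0 ≤ ε * v ∧ 0 ≤ ε * w := by
  have exists_sign (a b : ℤ) (hab : 0 ≤ a * b) :
      ∃ s : ℤ, (s = 1 ∨ s = -1) ∧ 0 ≤ s * a ∧ 0 ≤ s * b := by
    rcases mul_nonneg_iff.1 hab with ⟨_, _⟩ | ⟨_, _⟩
    · exact ⟨1, .inl rfl, by omega, by omega⟩
    · exact ⟨-1, .inr rfl, by omega, by omega⟩
  obtain ⟨s, hs, hsv, hsw⟩ := exists_sign v.1 w.1 h.1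
  obtain ⟨t, ht, htv, htw⟩ := exists_sign v.2 w.2 h.2
  exact ⟨(s, t), mul_self_eq_one_iff_signs.2 ⟨hs, ht⟩, ⟨hsv, htv⟩, ⟨hsw, htw⟩⟩

end Reflection

section RayList

variable {x : ℤ × ℤ} {j : ℕ}

lemma pair_infix_cons_cons {α : Type*} {a b c d : α} {l : List α} :
    [a, b] <:+: c :: d :: l ↔ (a = c ∧ b = d) ∨ [a, b] <:+: d :: l := by
  simp [List.infix_cons_iff (l₂ := d :: l)]

lemma pair_infix_iff_of_pairwise {α : Type*} {r : α → α → Prop} [Std.Asymm r] {l : List α}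
    (hl : l.Pairwise r) {a b : α} :
    [a, b] <:+: l ↔ a ∈ l ∧ b ∈ l ∧ r a b ∧ ∀ c ∈ l, ¬(r a c ∧ r c b) := by
  have asymm (x y : α) (h : r x y) : ¬r y x := Std.Asymm.asymm x y h
  induction l with
  | nil => simp
  | cons c t ih =>
    cases t with
    | nil =>
      suffices ¬r c c by simpa [List.infix_cons_iff] using fun ha hb => by simp [ha, hb, this]
      exact fun h => asymm c c h h
    | cons d t =>
      have hc : ∀ x ∈ d :: t, r c x := (List.pairwise_cons.1 hl).1
      have hd : ∀ x ∈ t, r d x := (List.pairwise_cons.1 hl.of_cons).1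
      refine pair_infix_cons_cons.trans ((or_congr_right (ih hl.of_cons)).trans ?_)
      constructor
      · rintro (⟨rfl, rfl⟩ | ⟨ha, hb, hab, hbetween⟩)
        · refine ⟨by simp, by simp, hc b (by simp), ?_⟩
          rintro x hx ⟨hax, hxb⟩
          obtain rfl | rfl | hx : x = a ∨ x = b ∨ x ∈ t := by simpa only [List.mem_cons] using hx
          · exact asymm x x hax hax
          · exact asymm x x hxb hxb
          · exact asymm b x (hd x hx) hxb
        · exact ⟨.tail _ ha, .tail _ hb, hab,
            List.forall_mem_cons.2 ⟨fun h => asymm c a (hc a ha) h.1, hbetween⟩⟩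
      · rintro ⟨ha, hb, hab, hbetween⟩
        have hb' : b ∈ d :: t := by grind
        rcases List.mem_cons.1 ha with rfl | ha
        · rcases List.mem_cons.1 hb' with rfl | hbt
          · exact .inl ⟨rfl, rfl⟩
          · exact (hbetween d (by simp) ⟨hc d (by simp), hd b hbt⟩).elim
        · exact .inr ⟨ha, hb', hab, fun x hx => hbetween x (.tail _ hx)⟩

lemma mem_mediantInsert : ∀ {L : List (ℤ × ℤ)},
    x ∈ mediantInsert L ↔ x ∈ L ∨ ∃ p q, [p, q] <:+: L ∧ p + q = x
  | [] => by simp [mediantInsert]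
  | [a] => by simp [mediantInsert, List.infix_cons_iff]
  | a :: b :: t => by
    simp only [mediantInsert, List.mem_cons, mem_mediantInsert (L := b :: t),
      pair_infix_cons_cons, or_and_right, exists_or, and_assoc, exists_and_left, exists_eq_left]
    tauto

lemma pairwise_mediantInsert : ∀ {L : List (ℤ × ℤ)}, L.Pairwise (0 < latDet · ·) →
    (mediantInsert L).Pairwise (0 < latDet · ·)
  | [], _ => .nil
  | [_], h => h
  | a :: b :: t, h => by
    obtain ⟨ha, hbt⟩ := List.pairwise_cons.1 h
    have ha_lt : ∀ x ∈ mediantInsert (b :: t), 0 < latDet a x := by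
      intro x hx
      rcases mem_mediantInsert.1 hx with hx | ⟨p, q, hpq, rfl⟩
      · exact ha x hx
      · rw [latDet_add_right]
        exact add_pos (ha p (hpq.subset (by simp))) (ha q (hpq.subset (by simp)))
    have hb_le : ∀ x ∈ b :: t, 0 ≤ latDet b x := by
      rintro x (_ | ⟨_, hx⟩)
      · exact (latDet_self b).ge
      · exact (List.rel_of_pairwise_cons hbt hx).le
    have hb_le' : ∀ x ∈ mediantInsert (b :: t), 0 ≤ latDet b x := by
      intro x hx
      rcases mem_mediantInsert.1 hx with hx | ⟨p, q, hpq, rfl⟩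
      · exact hb_le x hx
      · rw [latDet_add_right]
        exact add_nonneg (hb_le p (hpq.subset (by simp))) (hb_le q (hpq.subset (by simp)))
    refine List.pairwise_cons.2 ⟨List.forall_mem_cons.2 ⟨?_, ha_lt⟩,
      List.pairwise_cons.2 ⟨fun x hx => ?_, pairwise_mediantInsert hbt⟩⟩
    · rw [latDet_add_right, latDet_self, zero_add]
      exact ha b List.mem_cons_self
    · rw [latDet_add_left]
      exact add_pos_of_pos_of_nonneg (ha_lt x hx) (hb_le' x hx)

lemma rayList_subset_succ (j : ℕ) : rayList j ⊆ rayList (j + 1) :=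
  fun _ hx => mem_mediantInsert.2 (.inl hx)

lemma pairwise_rayList : ∀ j, (rayList j).Pairwise (0 < latDet · ·)
  | 0 => by simp [rayList, latDet]
  | j + 1 => pairwise_mediantInsert (pairwise_rayList j)

lemma nonneg_of_mem_rayList (hx : x ∈ rayList j) : 0 ≤ x := by
  induction j generalizing x with
  | zero =>
    simp only [rayList, List.mem_cons, List.not_mem_nil, or_false] at hx
    rcases hx with rfl | rfl <;> decide
  | succ j ih =>
    rcases mem_mediantInsert.1 hx with hx | ⟨p, q, hpq, rfl⟩
    · exact ih hx
    · exact add_nonneg (ih (hpq.subset (by simp))) (ih (hpq.subset (by simp)))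

end RayList

section RaySet

variable {p q x ε : ℤ × ℤ} {j : ℕ}

lemma mem_raySet_iff : x ∈ raySet j ↔ ∃ q ∈ rayList j, ∃ ε, ε * ε = 1 ∧ x = ε * q := by
  simp only [raySet, Set.mem_ofPred_eq, mul_self_eq_one_iff_signs, Prod.exists, and_assoc]
  rfl

lemma mem_raySet_of_mem_rayList (hx : x ∈ rayList j) : x ∈ raySet j :=
  mem_raySet_iff.2 ⟨x, hx, 1, one_mul 1, (one_mul x).symm⟩

lemma mul_mem_raySet (hε : ε * ε = 1) (hx : x ∈ raySet j) : ε * x ∈ raySet j := by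
  obtain ⟨q, hq, δ, hδ, rfl⟩ := mem_raySet_iff.1 hx
  exact mem_raySet_iff.2 ⟨q, hq, ε * δ, by rw [mul_mul_mul_comm, hε, hδ, one_mul],
    (mul_assoc ..).symm⟩

lemma mem_rayList_of_mem_raySet (hx : x ∈ raySet j) (hx0 : 0 ≤ x) : x ∈ rayList j := by
  obtain ⟨q, hq, ε, hε, rfl⟩ := mem_raySet_iff.1 hx
  obtain ⟨hε₁, hε₂⟩ := mul_self_eq_one_iff_signs.1 hε
  obtain ⟨hq₁, hq₂⟩ := nonneg_of_mem_rayList hq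
  obtain ⟨hx₁, hx₂⟩ := hx0
  have sign_mul_eq_self {s a : ℤ} (hs : s = 1 ∨ s = -1) (ha : 0 ≤ a) (hsa : 0 ≤ s * a) :
      s * a = a := by
    rcases hs with rfl | rfl <;> omega
  suffices ε * q = q by rwa [this]
  ext
  · exact sign_mul_eq_self hε₁ hq₁ hx₁
  · exact sign_mul_eq_self hε₂ hq₂ hx₂

lemma raySet_subset_succ (j : ℕ) : raySet j ⊆ raySet (j + 1) := fun _ hx => by
  obtain ⟨q, hq, hε⟩ := hx
  exact ⟨q, rayList_subset_succ j hq, hε⟩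

lemma raySet_zero : raySet 0 = {(1, 0), (0, 1), (-1, 0), (0, -1)} := by
  ext x
  simp only [raySet, rayList, List.mem_cons, List.not_mem_nil, or_false,
    exists_eq_left, or_and_right, exists_or, exists_and_left, Set.mem_ofPred_eq,
    Set.mem_insert_iff, Set.mem_singleton_iff, mul_one, mul_zero]
  tauto

lemma axes_subset_raySet (j : ℕ) :
    ({(1, 0), (0, 1), (-1, 0), (0, -1)} : Set (ℤ × ℤ)) ⊆ raySet j :=
  raySet_zero ▸ monotone_nat_of_le_succ raySet_subset_succ j.zero_le

lemma adjacentPair_raySet_iff (hp : 0 ≤ p) (hq : 0 ≤ q) :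
    AdjacentPair (raySet j) p q ↔ [p, q] <:+: rayList j := by
  have : Std.Asymm fun v w : ℤ × ℤ => 0 < latDet v w :=
    ⟨fun v w h => by rw [← neg_latDet]; omega⟩
  have mem_iff {x : ℤ × ℤ} (hx : 0 ≤ x) : x ∈ raySet j ↔ x ∈ rayList j :=
    ⟨fun h => mem_rayList_of_mem_raySet h hx, mem_raySet_of_mem_rayList⟩
  rw [adjacentPair_iff, pair_infix_iff_of_pairwise (pairwise_rayList j), mem_iff hp, mem_iff hq]
  refine and_congr_right' <| and_congr_right' <| and_congr_right fun hpq => ⟨?_, ?_⟩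
  · exact fun h u hu => h u (mem_raySet_of_mem_rayList hu)
  · intro h u hu hcone
    exact h u ((mem_iff (nonneg_of_mem_openCone hp hq hpq hcone)).1 hu) hcone

lemma AdjacentPair.add_mem_raySet_succ (h : AdjacentPair (raySet j) p q) :
    p + q ∈ raySet (j + 1) := by
  obtain ⟨ε, hε, hp, hq⟩ :=
    exists_sign_mul_nonneg (h.mul_nonneg_of_axes_mem (axes_subset_raySet j))
  have hadd : ε * p + ε * q ∈ rayList (j + 1) := by
    rcases h.mul_left hε (fun _ => mul_mem_raySet hε) with h | h
    · exact mem_mediantInsert.2 (.inr ⟨_, _, (adjacentPair_raySet_iff hp hq).1 h, rfl⟩)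
    · exact mem_mediantInsert.2 (.inr ⟨_, _, (adjacentPair_raySet_iff hq hp).1 h, add_comm ..⟩)
  rw [← mul_mul_cancel_of_mul_self_eq_one hε (p + q), mul_add]
  exact mul_mem_raySet hε (mem_raySet_of_mem_rayList hadd)

lemma raySet_succ (j : ℕ) : raySet (j + 1) = blowUpAll (raySet j) := by
  refine Set.Subset.antisymm (fun x hx => ?_) ?_
  · obtain ⟨q, hq, ε, hε, rfl⟩ := mem_raySet_iff.1 hx
    refine mul_mem_blowUpAll hε (fun _ => mul_mem_raySet hε) ?_
    rcases mem_mediantInsert.1 hq with hq | ⟨a, b, hab, rfl⟩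
    · exact subset_blowUpAll _ (mem_raySet_of_mem_rayList hq)
    · have ha : 0 ≤ a := nonneg_of_mem_rayList (hab.subset (by simp))
      have hb : 0 ≤ b := nonneg_of_mem_rayList (hab.subset (by simp))
      exact ((adjacentPair_raySet_iff ha hb).2 hab).add_mem_blowUpAll
  · rintro _ (hx | ⟨v, w, h, rfl⟩)
    · exact raySet_subset_succ j hx
    · exact h.add_mem_raySet_succ

lemma raySet_eq_iterate_blowUpAll (j : ℕ) : raySet j = blowUpAll^[j] (raySet 0) := by
  induction j with
  | zero => rfl
  | succ j ih => rw [raySet_succ, ih, Function.iterate_succ_apply']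

lemma finite_raySet_zero : (raySet 0).Finite := raySet_zero ▸ Set.toFinite _

lemma distinctRays_raySet_zero : DistinctRays (raySet 0) := by
  rw [raySet_zero]
  intro u hu v hv hne h
  have hu0 : u ≠ 0 := by rcases hu with rfl | rfl | rfl | rfl <;> decide
  have hv0 : v ≠ 0 := by rcases hv with rfl | rfl | rfl | rfl <;> decide
  obtain ⟨r, s, hr, hs, hrs⟩ := h.exists_pos hu0 hv0
  simp only [Prod.ext_iff, Prod.smul_fst, Prod.smul_snd, smul_eq_mul] at hrs
  rcases hu with rfl | rfl | rfl | rfl <;> rcases hv with rfl | rfl | rfl | rfl <;>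
    first | exact hne rfl | omega

end RaySet

/-- Let `R ⊆ ℤ²` be obtained from `S_0 = {(1,0),(0,1),(−1,0),(0,−1)}`
(the ray set of the fan of `ℂP¹ × ℂP¹`) by a finite sequence of toric blow-up steps.
Then there exist a natural number `j` and a further finite sequence of toric blow-up
steps taking `R` to the set `S_j` exactly: every iterated toric blow-up of
`ℂP¹ × ℂP¹` can be further blown up torus-equivariantly to become one of the surfaces
`X_j`. -/
theorem blowup_of_CP1xCP1_reaches_Xj (m : ℕ) (R : Set (ℤ × ℤ))
    (hR : BlowUpSeq m ({(1, 0), (0, 1), (-1, 0), (0, -1)} : Set (ℤ × ℤ)) R) :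
    ∃ j r : ℕ, BlowUpSeq r R (raySet j) := by
  rw [← raySet_zero] at hR
  exact ⟨m, raySet_eq_iterate_blowUpAll m ▸
    blowup_of_CP1xCP1_reaches_Xj_general finite_raySet_zero distinctRays_raySet_zero hR⟩
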